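/- arXiv:1906.02372 — 2 statements merged into one kernel-verified Lean document; each statement's English description precedes it below -/
import Mathlib

section
/- Let T be a rooted, countably infinite, locally finite tree. Then sup{ |γ(v) − γ(par(v))|·|v| : v ∈ T, v ≠ o } < ∞ if and only if T is homogeneous by sectors at some level N. -/
/-!
Both sides say that `γ(v) = γ(par v)` for every vertex `v` of sufficiently large depth.

If the supremum is below a natural number `M`, then at depth at least `M` the integer
`|γ(v) - γ(par v)|` has to vanish, since otherwise its product with `|v|` is at least `M`; hence `γ`
is constant along every path descending from level `M`. Conversely, if `T` is homogeneous by sectors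
at level `N`, then a vertex deeper than `N` and its parent lie in a common sector rooted at level
`N`, so only the vertices of depth at most `N` contribute to the supremum, and by local finiteness
there are finitely many of them.
-/

open scoped ENNReal NNReal

/-- A rooted, countably infinite, locally finite tree, encoded via its parent
function and depth function. Every non-root vertex `v` has a parent `par v`
one level closer to the root; iterating the parent function from any vertex
eventually reaches the root (this is forced by the depth function decreasing). -/
structure LipTree where
  V : Type
  countable : Countable V
  infinite : Infinite V
  root : V
  par : V → V
  par_root : par root = root
  depth : V → ℕ
  depth_root : depth root = 0
  depth_par : ∀ v, v ≠ root → depth v = depth (par v) + 1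
  locFin : ∀ v : V, {w : V | w ≠ root ∧ par w = v}.Finite

namespace LipTree

variable (T : LipTree)

/-- The set of children of a vertex. -/
def children (v : T.V) : Set T.V := {w | w ≠ T.root ∧ T.par w = v}

/-- `γ(v)`: the number of children of `v`. -/
noncomputable def gamma (v : T.V) : ℕ := (T.locFin v).toFinset.card

open Classical in
/-- `f'`, the "derivative" of `f` : `f'(o) = f(o)`, `f'(v) = f(v) - f(par v)` otherwise. -/
noncomputable def deriv (f : T.V → ℂ) : T.V → ℂ :=
  fun v => if v = T.root then f v else f v - f (T.par v)

/-- `‖f‖ = sup_{v} |f'(v)|`, valued in `[0,∞]`. -/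
noncomputable def lnorm (f : T.V → ℂ) : ℝ≥0∞ := ⨆ v, (‖T.deriv f v‖₊ : ℝ≥0∞)

/-- The Lipschitz space `𝓛`. -/
def Lip : Set (T.V → ℂ) := {f | T.lnorm f < ⊤}

/-- The little Lipschitz space `𝓛₀`: members of `𝓛` with `f'(v) → 0` as `|v| → ∞`. -/
def Lip0 : Set (T.V → ℂ) :=
  {f | T.lnorm f < ⊤ ∧
    Filter.Tendsto (T.deriv f) (Filter.comap T.depth Filter.atTop) (nhds 0)}

open Classical in
/-- The forward shift `S`. -/
noncomputable def fshift (f : T.V → ℂ) : T.V → ℂ :=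
  fun v => if v = T.root then 0 else f (T.par v)

/-- The backward shift `B`: `(Bf)(v) = Σ_{w child of v} f(w)`. -/
noncomputable def bshift (f : T.V → ℂ) : T.V → ℂ :=
  fun v => ∑ w ∈ (T.locFin v).toFinset, f w

/-- `T` is leafless: every vertex has a child. -/
def Leafless : Prop := ∀ v : T.V, (T.children v).Nonempty

/-- The sector (subtree) determined by `v`: `v` together with all its descendants. -/
def sector (v : T.V) : Set T.V := {w | ∃ n : ℕ, T.par^[n] w = v}

/-- `T` is homogeneous by sectors at level `N`. -/
def HomBySectors (N : ℕ) : Prop :=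
  ∀ v : T.V, T.depth v = N → ∀ w ∈ T.sector v, T.gamma w = T.gamma v

/-- `T` is homogeneous of order `γ`. -/
def Homogeneous (γ : ℕ) : Prop := ∀ v : T.V, T.gamma v = γ

/-- The operator norm of `Bⁿ` on `𝓛`: `sup { ‖Bⁿ f‖ : ‖f‖ ≤ 1 }`. -/
noncomputable def opNormBpow (n : ℕ) : ℝ≥0∞ :=
  ⨆ f ∈ {f : T.V → ℂ | T.lnorm f ≤ 1}, T.lnorm (T.bshift^[n] f)

/-- The operator norm of `B` on `𝓛`: `sup { ‖B f‖ : ‖f‖ ≤ 1 }`. -/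
noncomputable def opNormB : ℝ≥0∞ :=
  ⨆ f ∈ {f : T.V → ℂ | T.lnorm f ≤ 1}, T.lnorm (T.bshift f)

/-- The quantity `Λ = sup_{v ≠ o} (γ(v) + γ(par v) - 1 + |γ(v) - 1| + |γ(v) - γ(par v)|·|v|)`. -/
noncomputable def Lambda : ℝ≥0∞ :=
  ⨆ v ∈ {v : T.V | v ≠ T.root},
    ((T.gamma v + T.gamma (T.par v) - 1
      + ((T.gamma v : ℤ) - 1).natAbs
      + ((T.gamma v : ℤ) - (T.gamma (T.par v) : ℤ)).natAbs * T.depth v : ℕ) : ℝ≥0∞)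

/-- An operator `A` on `𝓛₀` is hypercyclic if some orbit `{Aⁿ f}` is dense in `𝓛₀`. -/
def Hypercyclic (A : (T.V → ℂ) → (T.V → ℂ)) : Prop :=
  ∃ f ∈ T.Lip0, ∀ g ∈ T.Lip0, ∀ ε : ℝ≥0∞, 0 < ε →
    ∃ n : ℕ, T.lnorm (A^[n] f - g) < ε

end LipTree

namespace LipTree

theorem finite_depth_le (T : LipTree) (n : ℕ) : {v : T.V | T.depth v ≤ n}.Finite := by
  induction n with
  | zero =>
    refine (Set.finite_singleton T.root).subset fun v hv => ?_
    by_contra hne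
    have h := T.depth_par v hne
    have hv' : T.depth v ≤ 0 := hv
    omega
  | succ n ih =>
    refine ((Set.finite_singleton T.root).union (ih.biUnion fun u _ => T.locFin u)).subset
      fun v hv => ?_
    by_cases hne : v = T.root
    · exact Or.inl hne
    · have h := T.depth_par v hne
      have hv' : T.depth v ≤ n + 1 := hv
      have hp : T.depth (T.par v) ≤ n := by omega
      exact Or.inr (Set.mem_biUnion (x := T.par v) hp ⟨hne, rfl⟩)

theorem depth_iterate_par (T : LipTree) (k N : ℕ) (v : T.V) (h : T.depth v = N + k) :
    T.depth (T.par^[k] v) = N := by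
  induction k generalizing v with
  | zero => simpa using h
  | succ k ih =>
    have hne : v ≠ T.root := by
      rintro rfl
      have := T.depth_root
      omega
    have := T.depth_par v hne
    rw [Function.iterate_succ_apply]
    exact ih _ (by omega)

theorem HomBySectors.gamma_eq_gamma_par {T : LipTree} {N : ℕ} (hN : T.HomBySectors N) {v : T.V}
    (hv : N < T.depth v) : T.gamma v = T.gamma (T.par v) := by
  obtain ⟨k, hk⟩ : ∃ k, T.depth v = N + (k + 1) := ⟨T.depth v - N - 1, by omega⟩
  have hd := T.depth_iterate_par (k + 1) N v hk
  rw [hN _ hd v ⟨k + 1, rfl⟩, hN _ hd (T.par v) ⟨k, rfl⟩]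

/-- The depth inequality is carried along with the equality of `γ` because the induction needs the
intermediate vertices to stay at depth at least `N`. -/
theorem gamma_eq_of_iterate_par (T : LipTree) {N : ℕ}
    (h : ∀ v, v ≠ T.root → N < T.depth v → T.gamma v = T.gamma (T.par v)) {v : T.V}
    (hv : T.depth v = N) (n : ℕ) (w : T.V) (hw : T.par^[n] w = v) :
    N ≤ T.depth w ∧ T.gamma w = T.gamma v := by
  induction n generalizing w with
  | zero =>
    obtain rfl : w = v := hw
    exact ⟨hv.ge, rfl⟩
  | succ n ih =>
    obtain ⟨hd, hg⟩ := ih (T.par w) hw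
    by_cases hne : w = T.root
    · subst hne
      rw [T.par_root] at hd hg
      exact ⟨hd, hg⟩
    · have := T.depth_par w hne
      exact ⟨by omega, (h w hne (by omega)).trans hg⟩

end LipTree

/-- `sup{|γ(v) - γ(par v)|·|v| : v ≠ o} < ∞` iff `T` is homogeneous
by sectors at some level. -/
theorem homBySectors_iff_sup_finite (T : LipTree) :
    (⨆ v ∈ {v : T.V | v ≠ T.root},
        ((((T.gamma v : ℤ) - (T.gamma (T.par v) : ℤ)).natAbs * T.depth v : ℕ) : ℝ≥0∞)) < ⊤
    ↔ ∃ N : ℕ, T.HomBySectors N := by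
  constructor
  · intro h
    obtain ⟨M, hM⟩ := ENNReal.exists_nat_gt h.ne
    refine ⟨M, fun v hv w ⟨n, hw⟩ =>
      (T.gamma_eq_of_iterate_par (fun u hu hd => ?_) hv n w hw).2⟩
    have hlt : ((T.gamma u : ℤ) - (T.gamma (T.par u) : ℤ)).natAbs * T.depth u < M :=
      Nat.cast_lt.mp ((le_iSup₂ (f := fun (v : T.V) (_ : v ∈ {v : T.V | v ≠ T.root}) =>
        ((((T.gamma v : ℤ) - (T.gamma (T.par v) : ℤ)).natAbs * T.depth v : ℕ) : ℝ≥0∞))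
        u hu).trans_lt hM)
    have h0 : ((T.gamma u : ℤ) - (T.gamma (T.par u) : ℤ)).natAbs = 0 := by
      by_contra hne
      have := Nat.le_mul_of_pos_left (T.depth u) (Nat.pos_of_ne_zero hne)
      omega
    omega
  · rintro ⟨N, hN⟩
    obtain ⟨B, hB⟩ := ((T.finite_depth_le N).image fun v =>
      ((T.gamma v : ℤ) - (T.gamma (T.par v) : ℤ)).natAbs * T.depth v).bddAbove
    refine lt_of_le_of_lt (iSup₂_le fun v _ => ?_) (ENNReal.natCast_lt_top B)
    refine Nat.cast_le.mpr ?_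
    by_cases hd : T.depth v ≤ N
    · exact hB ⟨v, hd, rfl⟩
    · simp [hN.gamma_eq_gamma_par (not_le.mp hd)]
end

section
/- Let T be a rooted tree which is homogeneous of order γ (γ ≥ 1) and let B be the backward shift on 𝓛. Then the operator norm of B equals 2 if γ = 1, and equals 3γ − 2 if γ ≥ 2. -/
/-!
Write `u = par v` and let every vertex have `γ` children. For `v ≠ o`,

`(Bf)'(v) = Σ_{w child of v} f'(w) - Σ_{x child of u, x ≠ v} f'(x) + (γ - 1) f'(v)`,

so `|(Bf)'(v)| ≤ γ + (γ - 1) + (γ - 1) = 3γ - 2` when `‖f‖ ≤ 1`, while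
`(Bf)'(o) = γ f(o) + Σ_{w child of o} f'(w)` has modulus at most `2γ`
(`norm_deriv_bshift_le`, `norm_deriv_bshift_root_le`).
Hence `‖B‖ ≤ max (2γ) (3γ - 2)`, which is `2` for `γ = 1` and `3γ - 2` for `γ ≥ 2`.

Both bounds are attained. The function equal to `1` at `o` and to `2` elsewhere gives
`(Bf)'(o) = 2γ`. For `3γ - 2`, fix a child `v` of the root and use the function `extremal`,
whose derivative is `1` at `v` and at the children of `v`, and `-1` at the siblings of `v`.
-/

open scoped ENNReal NNReal

namespace LipTree

variable (T : LipTree)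

lemma lnorm_le_natCast_iff (f : T.V → ℂ) (n : ℕ) :
    T.lnorm f ≤ (n : ℝ≥0∞) ↔ ∀ v, ‖T.deriv f v‖ ≤ n := by
  unfold lnorm
  rw [iSup_le_iff]
  refine forall_congr' fun v => ?_
  rw [← ENNReal.coe_natCast, ENNReal.coe_le_coe, ← NNReal.coe_le_coe]
  simp

lemma natCast_le_lnorm (f : T.V → ℂ) (n : ℕ) (v : T.V) (h : (n : ℝ) ≤ ‖T.deriv f v‖) :
    (n : ℝ≥0∞) ≤ T.lnorm f := by
  refine le_trans ?_ (le_iSup (fun v => (‖T.deriv f v‖₊ : ℝ≥0∞)) v)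
  rw [← ENNReal.coe_natCast, ENNReal.coe_le_coe, ← NNReal.coe_le_coe]
  simpa using h

lemma deriv_root (f : T.V → ℂ) : T.deriv f T.root = f T.root := by
  simp [deriv]

lemma deriv_of_ne (f : T.V → ℂ) {v : T.V} (hv : v ≠ T.root) :
    T.deriv f v = f v - f (T.par v) := by
  simp [deriv, hv]

lemma mem_childFinset {v w : T.V} :
    w ∈ (T.locFin v).toFinset ↔ w ≠ T.root ∧ T.par w = v := by
  simp

lemma norm_sub_le_of_child {f : T.V → ℂ} (hf : ∀ v, ‖T.deriv f v‖ ≤ 1) {v w : T.V}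
    (hw : w ∈ (T.locFin v).toFinset) : ‖f w - f v‖ ≤ 1 := by
  obtain ⟨h1, h2⟩ := T.mem_childFinset.1 hw
  have := hf w
  rwa [T.deriv_of_ne f h1, h2] at this

variable {T}

lemma norm_deriv_bshift_root_le {γ : ℕ} (hom : T.Homogeneous γ) {f : T.V → ℂ}
    (hf : ∀ v, ‖T.deriv f v‖ ≤ 1) :
    ‖T.deriv (T.bshift f) T.root‖ ≤ 2 * γ := by
  have hc : (T.locFin T.root).toFinset.card = γ := hom T.root
  have h0 : ‖f T.root‖ ≤ 1 := by simpa [T.deriv_root] using hf T.root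
  rw [T.deriv_root, bshift]
  calc _ ≤ ∑ w ∈ (T.locFin T.root).toFinset, (2 : ℝ) := by
        refine norm_sum_le_of_le _ fun w hw => ?_
        have h1 := T.norm_sub_le_of_child hf hw
        have h2 := norm_add_le (f w - f T.root) (f T.root)
        rw [sub_add_cancel] at h2
        linarith
    _ = 2 * γ := by rw [Finset.sum_const, hc, nsmul_eq_mul, mul_comm]

open Classical in
/-- Away from the root, a homogeneous tree makes the values of `f` themselves cancel:
only values of `f'` survive in `(Bf)'(v)`. -/
lemma deriv_bshift_of_ne {g : ℕ} (hom : T.Homogeneous (g + 1)) (f : T.V → ℂ) {v : T.V}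
    (hv : v ≠ T.root) :
    T.deriv (T.bshift f) v =
      ∑ w ∈ (T.locFin v).toFinset, (f w - f v)
        - ∑ x ∈ (T.locFin (T.par v)).toFinset.erase v, (f x - f (T.par v))
        + g * (f v - f (T.par v)) := by
  have hc : (T.locFin v).toFinset.card = g + 1 := hom v
  have hc' : (T.locFin (T.par v)).toFinset.card = g + 1 := hom (T.par v)
  have hm : v ∈ (T.locFin (T.par v)).toFinset := T.mem_childFinset.2 ⟨hv, rfl⟩
  have he : ((T.locFin (T.par v)).toFinset.erase v).card = g := by
    rw [Finset.card_erase_of_mem hm, hc']; rfl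
  rw [T.deriv_of_ne _ hv]
  simp only [bshift]
  rw [← Finset.add_sum_erase _ f hm, Finset.sum_sub_distrib, Finset.sum_sub_distrib,
    Finset.sum_const, Finset.sum_const, hc, he]
  simp only [nsmul_eq_mul]
  push_cast
  ring

lemma norm_deriv_bshift_le {g : ℕ} (hom : T.Homogeneous (g + 1)) {f : T.V → ℂ}
    (hf : ∀ v, ‖T.deriv f v‖ ≤ 1) {v : T.V} (hv : v ≠ T.root) :
    ‖T.deriv (T.bshift f) v‖ ≤ 3 * g + 1 := by
  classical
  have hc : (T.locFin v).toFinset.card = g + 1 := hom v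
  have hc' : (T.locFin (T.par v)).toFinset.card = g + 1 := hom (T.par v)
  have hm : v ∈ (T.locFin (T.par v)).toFinset := T.mem_childFinset.2 ⟨hv, rfl⟩
  have he : ((T.locFin (T.par v)).toFinset.erase v).card = g := by
    rw [Finset.card_erase_of_mem hm, hc']; rfl
  rw [deriv_bshift_of_ne hom f hv]
  have h1 : ‖∑ w ∈ (T.locFin v).toFinset, (f w - f v)‖ ≤ g + 1 := by
    refine (norm_sum_le_of_le _ fun w hw => T.norm_sub_le_of_child hf hw).trans ?_
    simp [hc]
  have h2 : ‖∑ x ∈ (T.locFin (T.par v)).toFinset.erase v, (f x - f (T.par v))‖ ≤ g := by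
    refine (norm_sum_le_of_le _ fun w hw =>
      T.norm_sub_le_of_child hf (Finset.mem_of_mem_erase hw)).trans ?_
    rw [Finset.sum_const, he]; simp
  have h3 : ‖(g : ℂ) * (f v - f (T.par v))‖ ≤ g := by
    rw [norm_mul, Complex.norm_natCast]
    exact mul_le_of_le_one_right (Nat.cast_nonneg g) (T.norm_sub_le_of_child hf hm)
  refine (norm_add_le _ _).trans ?_
  have h4 := norm_sub_le (∑ w ∈ (T.locFin v).toFinset, (f w - f v))
    (∑ x ∈ (T.locFin (T.par v)).toFinset.erase v, (f x - f (T.par v)))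
  linarith

lemma opNormB_le {g : ℕ} (hom : T.Homogeneous (g + 1)) (n : ℕ) (h1 : 2 * (g + 1) ≤ n)
    (h2 : 3 * g + 1 ≤ n) : T.opNormB ≤ (n : ℝ≥0∞) := by
  refine iSup₂_le fun f hf => ?_
  have hf' : ∀ v, ‖T.deriv f v‖ ≤ 1 := by
    have := (T.lnorm_le_natCast_iff f 1).1 (by simpa using hf)
    simpa using this
  rw [lnorm_le_natCast_iff]
  intro v
  by_cases hv : v = T.root
  · subst hv
    exact (norm_deriv_bshift_root_le hom hf').trans (by exact_mod_cast h1)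
  · exact (norm_deriv_bshift_le hom hf' hv).trans (by exact_mod_cast h2)

lemma le_opNormB {f : T.V → ℂ} (hf : ∀ v, ‖T.deriv f v‖ ≤ 1) (n : ℕ) (v : T.V)
    (h : (n : ℝ) ≤ ‖T.deriv (T.bshift f) v‖) : (n : ℝ≥0∞) ≤ T.opNormB := by
  have hf1 : T.lnorm f ≤ 1 := by
    have := (T.lnorm_le_natCast_iff f 1).2 (by simpa using hf)
    simpa using this
  exact (T.natCast_le_lnorm _ n v h).trans (le_iSup₂_of_le f hf1 le_rfl)

lemma two_mul_le_opNormB {γ : ℕ} (hom : T.Homogeneous γ) :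
    ((2 * γ : ℕ) : ℝ≥0∞) ≤ T.opNormB := by
  classical
  have hc : (T.locFin T.root).toFinset.card = γ := hom T.root
  refine le_opNormB (f := fun x => if x = T.root then 1 else 2) (fun v => ?_) _ T.root ?_
  · by_cases hv : v = T.root
    · simp [deriv, hv]
    · by_cases hp : T.par v = T.root
      · simp only [deriv, hv, hp, if_true, if_false]; norm_num
      · simp [deriv, hv, hp]
  · rw [T.deriv_root, bshift, Finset.sum_congr rfl (g := fun _ => (2 : ℂ))
      (fun w hw => if_neg (T.mem_childFinset.1 hw).1), Finset.sum_const, hc]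
    simp [mul_comm]

open Classical in
/-- The extremal function for a child `v` of the root: `0` at the root, `1` at `v`, `-1` at the
siblings of `v`, `2` at the children of `v`, `0` at the other vertices of depth `2`, and `1` from
depth `3` on, which is within distance `1` of every value taken at depth `2`. -/
noncomputable def extremal (v : T.V) : T.V → ℂ := fun x =>
  if x = T.root then 0 else if x = v then 1 else if T.par x = T.root then -1
  else if T.par x = v then 2 else if T.par (T.par x) = T.root then 0 else 1

lemma norm_deriv_extremal_le {v : T.V} (hv : v ≠ T.root) (hp : T.par v = T.root) (x : T.V) :
    ‖T.deriv (extremal v) x‖ ≤ 1 := by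
  by_cases hx : x = T.root
  · simp [deriv, extremal, hx]
  rw [T.deriv_of_ne _ hx]
  by_cases hxv : x = v
  · simp [extremal, hxv, hv, hp]
  by_cases h1 : T.par x = T.root
  · simp [extremal, hx, hxv, h1]
  by_cases h2 : T.par x = v
  · simp only [extremal, hx, hxv, h2, hv, if_true, if_false]; norm_num
  by_cases h3 : T.par (T.par x) = T.root
  · simp [extremal, hx, hxv, h1, h2, h3]
  by_cases h4 : T.par (T.par x) = v
  · simp only [extremal, hx, hxv, h1, h2, h4, hv, if_true, if_false]; norm_num
  by_cases h5 : T.par (T.par (T.par x)) = T.root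
  · simp [extremal, hx, hxv, h1, h2, h3, h4, h5]
  · simp [extremal, hx, hxv, h1, h2, h3, h4, h5]

lemma le_opNormB_of_homogeneous {g : ℕ} (hom : T.Homogeneous (g + 1)) :
    ((3 * g + 1 : ℕ) : ℝ≥0∞) ≤ T.opNormB := by
  classical
  have hroot : (T.locFin T.root).toFinset.card = g + 1 := hom T.root
  obtain ⟨v, hvm⟩ := Finset.card_pos.1 (hroot.symm ▸ Nat.succ_pos g : 0 < (T.locFin T.root).toFinset.card)
  obtain ⟨hv, hp⟩ := T.mem_childFinset.1 hvm
  refine le_opNormB (norm_deriv_extremal_le hv hp) _ v ?_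
  have hc : (T.locFin v).toFinset.card = g + 1 := hom v
  have he : ((T.locFin T.root).toFinset.erase v).card = g := by
    rw [Finset.card_erase_of_mem hvm, hroot]; rfl
  have e0 : extremal v T.root = 0 := by simp [extremal]
  have e1 : extremal v v = 1 := by simp [extremal, hv]
  rw [deriv_bshift_of_ne hom _ hv, hp, e0, e1]
  have s1 : ∑ w ∈ (T.locFin v).toFinset, (extremal v w - 1) = g + 1 := by
    rw [Finset.sum_congr rfl (g := fun _ => (1 : ℂ)), Finset.sum_const, hc]
    · simp
    · intro w hw
      obtain ⟨a, b⟩ := T.mem_childFinset.1 hw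
      -- `w = v` would make `v` its own parent, whereas `par v` is the root
      have hwv : w ≠ v := by
        rintro rfl
        exact hv (b.symm.trans hp)
      simp only [extremal, a, hwv, b, hv, if_true, if_false]; norm_num
  have s2 : ∑ x ∈ (T.locFin T.root).toFinset.erase v, (extremal v x - 0) = -g := by
    rw [Finset.sum_congr rfl (g := fun _ => (-1 : ℂ)), Finset.sum_const, he]
    · simp
    · intro w hw
      obtain ⟨hwv, hw⟩ := Finset.mem_erase.1 hw
      obtain ⟨a, b⟩ := T.mem_childFinset.1 hw
      simp [extremal, a, hwv, b]
  rw [s1, s2]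
  have : ((g : ℂ) + 1 - -g + g * (1 - 0)) = ((3 * g + 1 : ℕ) : ℂ) := by
    push_cast; ring
  rw [this, Complex.norm_natCast]

end LipTree

/-- on a homogeneous tree of order `γ ≥ 1`, `‖B‖ = 2` if `γ = 1`
and `‖B‖ = 3γ - 2` if `γ ≥ 2`. -/
theorem opNormB_homogeneous (T : LipTree) (γ : ℕ) (hγ : 1 ≤ γ) (hom : T.Homogeneous γ) :
    (γ = 1 → T.opNormB = 2) ∧
    (2 ≤ γ → T.opNormB = ((3 * γ - 2 : ℕ) : ℝ≥0∞)) := by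
  obtain ⟨g, rfl⟩ : ∃ g, γ = g + 1 := ⟨γ - 1, by omega⟩
  constructor
  · intro h
    obtain rfl : g = 0 := by omega
    refine le_antisymm ?_ ?_
    · exact_mod_cast LipTree.opNormB_le hom 2 (by omega) (by omega)
    · exact_mod_cast LipTree.two_mul_le_opNormB hom
  · intro h
    have e : 3 * (g + 1) - 2 = 3 * g + 1 := by omega
    rw [e]
    exact le_antisymm (LipTree.opNormB_le hom _ (by omega) le_rfl)
      (LipTree.le_opNormB_of_homogeneous hom)
end
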